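/- The identity (192/π²) · ∫₀^{π/2} ∫₀^{π/2} ∫₀^{π/2} [ cos ψ · √(cos²φ · sin²ψ + cos²ψ) + cos ψ · sin ψ · √(sin²θ · sin²φ + cos²φ) ] · sin φ · sin²ψ dψ dφ dθ = 6·(1 + 4/π) holds. (This is the joint moment E(vl·ar) of the volume and surface area of the projection of a unit 4-cube onto a uniformly random 3-subspace of ℝ⁴.) -/

import Mathlib

open Real

/-!
Surface area on an octant of the unit sphere `S² ⊆ ℝ³` is invariant under permutations of the
coordinates `x, y, z`, because projecting along one axis turns it into the density
`1 / √(1 - u² - v²)` on the quarter disc, which is symmetric in `u` and `v`.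

Both summands of the integrand reduce to such surface integrals. The second is
`cos ψ sin³ ψ`, which integrates to `1/4`, times `√(y² + z²)` on the sphere with angles `(θ, φ)`.
The first does not involve `θ` and is `y z √(x² + z²)` on the sphere with angles `(φ, ψ)`. Permuting
coordinates moves the square root to `√(x² + y²)`, the sine of the polar angle, so that the
integrals separate into elementary ones with values `π² / 8` and `1/4`.
-/

open MeasureTheory Set

section IteratedIntegrals

variable {E : Type*} [NormedAddCommGroup E] [NormedSpace ℝ E]

lemma intervalIntegral_eq_integral_Ioo {a b : ℝ} (hab : a ≤ b) (f : ℝ → E) :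
    ∫ x in a..b, f x = ∫ x in Ioo a b, f x := by
  rw [intervalIntegral.integral_of_le hab, integral_Ioc_eq_integral_Ioo]

lemma setIntegral_Ioo_prod_Ioo_eq_intervalIntegral {a b c d : ℝ} (hab : a ≤ b) (hcd : c ≤ d)
    {f : ℝ × ℝ → E} (hf : Continuous f) :
    ∫ p in Ioo a b ×ˢ Ioo c d, f p = ∫ x in a..b, ∫ y in c..d, f (x, y) := by
  have integrable : IntegrableOn f (Ioo a b ×ˢ Ioo c d) :=
    (hf.continuousOn.integrableOn_compact (isCompact_Icc.prod isCompact_Icc)).mono_set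
      (prod_mono Ioo_subset_Icc_self Ioo_subset_Icc_self)
  simp only [intervalIntegral_eq_integral_Ioo hab, intervalIntegral_eq_integral_Ioo hcd]
  exact setIntegral_prod f integrable

lemma integral_integral_integral_add_mul {F G : ℝ → ℝ → ℝ} {h : ℝ → ℝ}
    (hF : Continuous F.uncurry) (hG : Continuous G.uncurry) (hh : Continuous h)
    (a₁ b₁ a₂ b₂ a₃ b₃ : ℝ) :
    ∫ x in a₁..b₁, ∫ y in a₂..b₂, ∫ z in a₃..b₃, (F y z + G x y * h z) =
      (b₁ - a₁) * (∫ y in a₂..b₂, ∫ z in a₃..b₃, F y z) +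
        (∫ x in a₁..b₁, ∫ y in a₂..b₂, G x y) * ∫ z in a₃..b₃, h z := by
  have continuous_integral {H : ℝ → ℝ → ℝ} (hH : Continuous H.uncurry) (a b : ℝ) :
      Continuous fun x ↦ ∫ y in a..b, H x y :=
    intervalIntegral.continuous_parametric_intervalIntegral_of_continuous' hH a b
  have inner (x y : ℝ) : ∫ z in a₃..b₃, (F y z + G x y * h z) =
      (∫ z in a₃..b₃, F y z) + G x y * ∫ z in a₃..b₃, h z := by
    rw [intervalIntegral.integral_add ((hF.uncurry_left y).intervalIntegrable _ _)
      ((hh.intervalIntegrable _ _).const_mul _), intervalIntegral.integral_const_mul]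
  have middle (x : ℝ) : ∫ y in a₂..b₂, ((∫ z in a₃..b₃, F y z) + G x y * ∫ z in a₃..b₃, h z) =
      (∫ y in a₂..b₂, ∫ z in a₃..b₃, F y z) +
        (∫ y in a₂..b₂, G x y) * ∫ z in a₃..b₃, h z := by
    rw [intervalIntegral.integral_add ((continuous_integral hF _ _).intervalIntegrable _ _)
      (((hG.uncurry_left x).intervalIntegrable _ _).mul_const _),
      intervalIntegral.integral_mul_const]
  simp only [inner, middle]
  rw [intervalIntegral.integral_add intervalIntegrable_const
    (((continuous_integral hG _ _).intervalIntegrable _ _).mul_const _),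
    intervalIntegral.integral_const, intervalIntegral.integral_mul_const, smul_eq_mul]

end IteratedIntegrals

lemma integral_cos_mul_sin_pow (n : ℕ) (a b : ℝ) :
    ∫ x in a..b, cos x * sin x ^ n = (sin b ^ (n + 1) - sin a ^ (n + 1)) / (n + 1) := by
  simpa [mul_comm] using integral_sin_pow_mul_cos_pow_odd (a := a) (b := b) n 0

lemma integral_cos_mul_sin_pow_three : ∫ x in (0:ℝ)..(π / 2), cos x * sin x ^ 3 = 1 / 4 := by
  norm_num [integral_cos_mul_sin_pow]

section SphereOctant

/-- The range of the azimuth `p.1` and the polar angle `p.2` of the points of the unit sphere with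
positive coordinates. -/
def octantAngles : Set (ℝ × ℝ) := Ioo 0 (π / 2) ×ˢ Ioo 0 (π / 2)

/-- The open unit disc intersected with the open first quadrant: the projection of the octant of the
unit sphere to a coordinate plane. -/
def quarterDisc : Set (ℝ × ℝ) := {q | 0 < q.1 ∧ 0 < q.2 ∧ q.1 ^ 2 + q.2 ^ 2 < 1}

/-- The projection to the `yz`-plane of the point of the unit sphere with azimuth `p.1` and polar
angle `p.2`. -/
noncomputable def sphereProjYZ (p : ℝ × ℝ) : ℝ × ℝ := (sin p.1 * sin p.2, cos p.2)

/-- The derivative of `sphereProjYZ`. -/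
noncomputable def fderivSphereProjYZ (p : ℝ × ℝ) : ℝ × ℝ →L[ℝ] ℝ × ℝ :=
  (Matrix.toLin (.finTwoProd ℝ) (.finTwoProd ℝ)
    !![cos p.1 * sin p.2, sin p.1 * cos p.2; 0, -sin p.2]).toContinuousLinearMap

lemma measurableSet_octantAngles : MeasurableSet octantAngles :=
  measurableSet_Ioo.prod measurableSet_Ioo

lemma trig_pos_of_mem_octantAngles {p : ℝ × ℝ} (hp : p ∈ octantAngles) :
    0 < sin p.1 ∧ 0 < cos p.1 ∧ 0 < sin p.2 ∧ 0 < cos p.2 := by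
  obtain ⟨⟨h₁, h₂⟩, h₃, h₄⟩ := hp
  refine ⟨sin_pos_of_pos_of_lt_pi h₁ ?_, cos_pos_of_mem_Ioo ⟨?_, h₂⟩,
    sin_pos_of_pos_of_lt_pi h₃ ?_, cos_pos_of_mem_Ioo ⟨?_, h₄⟩⟩ <;> linarith [pi_pos]

lemma hasFDerivAt_sphereProjYZ (p : ℝ × ℝ) :
    HasFDerivAt sphereProjYZ (fderivSphereProjYZ p) p := by
  unfold fderivSphereProjYZ
  rw [Matrix.toLin_finTwoProd_toContinuousLinearMap]
  convert! HasFDerivAt.prodMk (𝕜 := ℝ)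
    (((hasDerivAt_sin p.1).comp_hasFDerivAt p hasFDerivAt_fst).mul
      ((hasDerivAt_sin p.2).comp_hasFDerivAt p hasFDerivAt_snd))
    ((hasDerivAt_cos p.2).comp_hasFDerivAt p hasFDerivAt_snd) using 2 <;>
  simp [smul_smul, add_comm, mul_comm, neg_smul _ (ContinuousLinearMap.snd ℝ ℝ ℝ)]

lemma det_fderivSphereProjYZ (p : ℝ × ℝ) :
    (fderivSphereProjYZ p).det = -(cos p.1 * sin p.2 ^ 2) := by
  unfold fderivSphereProjYZ
  simp only [LinearMap.det_toContinuousLinearMap, LinearMap.det_toLin, Matrix.det_fin_two_of]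
  ring

lemma injOn_sphereProjYZ : InjOn sphereProjYZ octantAngles := by
  intro p hp q hq hpq
  obtain ⟨hy, hz⟩ := Prod.mk.inj hpq
  have mem_Icc {t : ℝ} (ht : t ∈ Ioo 0 (π / 2)) : t ∈ Icc (-(π / 2)) (π / 2) ∧ t ∈ Icc 0 π := by
    constructor <;> constructor <;> linarith [ht.1, ht.2, pi_pos]
  have hpolar : p.2 = q.2 := injOn_cos (mem_Icc hp.2).2 (mem_Icc hq.2).2 hz
  have hsin : sin p.1 = sin q.1 := by
    rw [hpolar] at hy
    exact mul_right_cancel₀ (trig_pos_of_mem_octantAngles hq).2.2.1.ne' hy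
  exact Prod.ext (injOn_sin (mem_Icc hp.1).1 (mem_Icc hq.1).1 hsin) hpolar

lemma image_sphereProjYZ : sphereProjYZ '' octantAngles = quarterDisc := by
  apply Subset.antisymm
  · rintro _ ⟨p, hp, rfl⟩
    obtain ⟨hsin₁, hcos₁, hsin₂, hcos₂⟩ := trig_pos_of_mem_octantAngles hp
    have hx : 1 - ((sin p.1 * sin p.2) ^ 2 + cos p.2 ^ 2) = (cos p.1 * sin p.2) ^ 2 := by
      rw [mul_pow, mul_pow, cos_sq' p.1, cos_sq' p.2]
      ring
    exact ⟨mul_pos hsin₁ hsin₂, hcos₂, sub_pos.1 (hx ▸ pow_pos (mul_pos hcos₁ hsin₂) 2)⟩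
  · rintro ⟨y, z⟩ ⟨hy, hz, hyz⟩
    simp only at hy hz hyz
    have hr : 0 < √(1 - z ^ 2) := sqrt_pos.2 (by nlinarith)
    have hyr : y / √(1 - z ^ 2) < 1 := (div_lt_one hr).2 (lt_sqrt_of_sq_lt (by linarith))
    have hyr₀ : 0 < y / √(1 - z ^ 2) := div_pos hy hr
    refine ⟨(arcsin (y / √(1 - z ^ 2)), arccos z), ⟨⟨arcsin_pos.2 hyr₀, arcsin_lt_pi_div_two.2 hyr⟩,
      arccos_pos.2 (by nlinarith), arccos_lt_pi_div_two.2 hz⟩, ?_⟩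
    simp only [sphereProjYZ, sin_arccos]
    rw [sin_arcsin (by linarith) hyr.le, cos_arccos (by linarith) (by nlinarith),
      div_mul_cancel₀ _ hr.ne']

variable {E : Type*} [NormedAddCommGroup E] [NormedSpace ℝ E]

/-- The integral of `f x y z` over the points of the unit sphere with positive coordinates, with
respect to surface area, in terms of the azimuth `p.1` and the polar angle `p.2`. -/
noncomputable def sphereOctantIntegral (f : ℝ → ℝ → ℝ → E) : E :=
  ∫ p in octantAngles, sin p.2 • f (cos p.1 * sin p.2) (sin p.1 * sin p.2) (cos p.2)

lemma sphereOctantIntegral_eq_intervalIntegral {f : ℝ → ℝ → ℝ → E}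
    (hf : Continuous fun v : ℝ × ℝ × ℝ ↦ f v.1 v.2.1 v.2.2) :
    sphereOctantIntegral f = ∫ θ in (0:ℝ)..(π / 2), ∫ φ in (0:ℝ)..(π / 2),
      sin φ • f (cos θ * sin φ) (sin θ * sin φ) (cos φ) := by
  have continuous_point : Continuous fun p : ℝ × ℝ ↦
      (cos p.1 * sin p.2, sin p.1 * sin p.2, cos p.2) := by fun_prop
  exact setIntegral_Ioo_prod_Ioo_eq_intervalIntegral pi_div_two_pos.le pi_div_two_pos.le
    ((continuous_sin.comp continuous_snd).smul (hf.comp continuous_point))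

lemma sphereOctantIntegral_eq_integral_quarterDisc (f : ℝ → ℝ → ℝ → E) :
    sphereOctantIntegral f = ∫ q in quarterDisc,
      (√(1 - q.1 ^ 2 - q.2 ^ 2))⁻¹ • f (√(1 - q.1 ^ 2 - q.2 ^ 2)) q.1 q.2 := by
  rw [← image_sphereProjYZ, integral_image_eq_integral_abs_det_fderiv_smul volume
    measurableSet_octantAngles (fun p _ ↦ (hasFDerivAt_sphereProjYZ p).hasFDerivWithinAt)
    injOn_sphereProjYZ]
  refine setIntegral_congr_fun measurableSet_octantAngles fun p hp ↦ ?_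
  obtain ⟨-, hcos₁, hsin₂, -⟩ := trig_pos_of_mem_octantAngles hp
  have hx : √(1 - (sin p.1 * sin p.2) ^ 2 - cos p.2 ^ 2) = cos p.1 * sin p.2 := by
    rw [sqrt_eq_iff_mul_self_eq_of_pos (mul_pos hcos₁ hsin₂), cos_sq' p.2, ← sq, mul_pow, mul_pow,
      cos_sq' p.1]
    ring
  have hdensity : |(fderivSphereProjYZ p).det| * (cos p.1 * sin p.2)⁻¹ = sin p.2 := by
    rw [det_fderivSphereProjYZ, abs_neg, abs_of_pos (by positivity)]
    field_simp
  simp only [sphereProjYZ, hx, smul_smul, hdensity]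

lemma sphereOctantIntegral_swap_yz (f : ℝ → ℝ → ℝ → E) :
    sphereOctantIntegral (fun x y z ↦ f x z y) = sphereOctantIntegral f := by
  have measurePreserving_swap : MeasurePreserving (Prod.swap : ℝ × ℝ → ℝ × ℝ) :=
    Measure.measurePreserving_swap
  have preimage_swap : Prod.swap ⁻¹' quarterDisc = quarterDisc := by
    ext ⟨u, v⟩
    simp only [quarterDisc, mem_preimage, Prod.swap_prod_mk, mem_ofPred_eq, add_comm (v ^ 2)]
    tauto
  rw [sphereOctantIntegral_eq_integral_quarterDisc, sphereOctantIntegral_eq_integral_quarterDisc,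
    ← measurePreserving_swap.setIntegral_preimage_emb
      MeasurableEquiv.prodComm.measurableEmbedding, preimage_swap]
  simp only [Prod.fst_swap, Prod.snd_swap, sub_right_comm (1 : ℝ)]

lemma sphereOctantIntegral_swap_xy (f : ℝ → ℝ → ℝ → E) :
    sphereOctantIntegral (fun x y z ↦ f y x z) = sphereOctantIntegral f := by
  let reflect : ℝ × ℝ ≃ᵐ ℝ × ℝ := (MeasurableEquiv.subLeft (π / 2)).prodCongr (.refl ℝ)
  have reflect_apply (p : ℝ × ℝ) : reflect p = (π / 2 - p.1, p.2) := rfl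
  have hreflect : MeasurePreserving reflect :=
    (volume.measurePreserving_sub_left (π / 2)).prod (.id volume)
  have preimage_reflect : reflect ⁻¹' octantAngles = octantAngles := by
    ext p
    simp only [octantAngles, mem_preimage, reflect_apply, mem_prod, mem_Ioo, sub_pos,
      sub_lt_self_iff, and_comm (a := p.1 < π / 2)]
  unfold sphereOctantIntegral
  rw [← hreflect.setIntegral_preimage_emb reflect.measurableEmbedding, preimage_reflect]
  simp only [reflect_apply, sin_pi_div_two_sub, cos_pi_div_two_sub]

lemma sphereOctantIntegral_monomial_mul_sqrt (i j k : ℕ) :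
    sphereOctantIntegral (fun x y z ↦ x ^ i * y ^ j * z ^ k * √(x ^ 2 + y ^ 2)) =
      (∫ θ in (0:ℝ)..(π / 2), cos θ ^ i * sin θ ^ j) *
        ∫ φ in (0:ℝ)..(π / 2), sin φ ^ (i + j + 2) * cos φ ^ k := by
  rw [intervalIntegral_eq_integral_Ioo pi_div_two_pos.le,
    intervalIntegral_eq_integral_Ioo pi_div_two_pos.le, ← setIntegral_prod_mul]
  refine setIntegral_congr_fun measurableSet_octantAngles fun p hp ↦ ?_
  have hsin : 0 < sin p.2 := (trig_pos_of_mem_octantAngles hp).2.2.1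
  have hsqrt : √((cos p.1 * sin p.2) ^ 2 + (sin p.1 * sin p.2) ^ 2) = sin p.2 := by
    rw [mul_pow, mul_pow, ← add_mul, cos_sq_add_sin_sq, one_mul, sqrt_sq hsin.le]
  simp only [hsqrt, smul_eq_mul]
  ring

lemma sphereOctantIntegral_sqrt_yz :
    sphereOctantIntegral (fun _ y z ↦ √(y ^ 2 + z ^ 2)) = π ^ 2 / 8 := by
  calc
    _ = sphereOctantIntegral (fun x _ z ↦ √(x ^ 2 + z ^ 2)) :=
      sphereOctantIntegral_swap_xy fun x _ z ↦ √(x ^ 2 + z ^ 2)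
    _ = sphereOctantIntegral (fun x y _ ↦ √(x ^ 2 + y ^ 2)) :=
      sphereOctantIntegral_swap_yz fun x y _ ↦ √(x ^ 2 + y ^ 2)
    _ = (∫ θ in (0:ℝ)..(π / 2), 1) * ∫ φ in (0:ℝ)..(π / 2), sin φ ^ 2 := by
      simpa using sphereOctantIntegral_monomial_mul_sqrt 0 0 0
    _ = π ^ 2 / 8 := by
      rw [intervalIntegral.integral_const, integral_sin_sq, cos_pi_div_two, sin_zero, smul_eq_mul]
      ring

lemma sphereOctantIntegral_mul_mul_sqrt_xz :
    sphereOctantIntegral (fun x y z ↦ y * z * √(x ^ 2 + z ^ 2)) = 1 / 4 := by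
  calc
    _ = sphereOctantIntegral (fun x y z ↦ z * y * √(x ^ 2 + y ^ 2)) :=
      sphereOctantIntegral_swap_yz fun x y z ↦ z * y * √(x ^ 2 + y ^ 2)
    _ = (∫ θ in (0:ℝ)..(π / 2), sin θ) * ∫ φ in (0:ℝ)..(π / 2), cos φ * sin φ ^ 3 := by
      simpa [mul_comm] using sphereOctantIntegral_monomial_mul_sqrt 0 1 1
    _ = 1 / 4 := by
      simp [integral_cos_mul_sin_pow_three]

end SphereOctant

/-- The joint moment `E(vl·ar)` of the volume and surface area of the projection of
a unit 4-cube onto a uniformly random 3-subspace of `ℝ⁴` equals `6(1 + 4/π)`. -/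
theorem joint_moment_volume_surface_area_projection_4cube :
    (192 / π ^ 2) *
      (∫ θ in (0:ℝ)..(π/2), ∫ φ in (0:ℝ)..(π/2), ∫ ψ in (0:ℝ)..(π/2),
        (Real.cos ψ * Real.sqrt (Real.cos φ ^ 2 * Real.sin ψ ^ 2 + Real.cos ψ ^ 2)
          + Real.cos ψ * Real.sin ψ *
            Real.sqrt (Real.sin θ ^ 2 * Real.sin φ ^ 2 + Real.cos φ ^ 2)) *
          Real.sin φ * Real.sin ψ ^ 2)
    = 6 * (1 + 4 / π) := by
  let F (φ ψ : ℝ) : ℝ :=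
    sin ψ * (sin φ * sin ψ * cos ψ * √((cos φ * sin ψ) ^ 2 + cos ψ ^ 2))
  let G (θ φ : ℝ) : ℝ := sin φ * √((sin θ * sin φ) ^ 2 + cos φ ^ 2)
  have integral_F : ∫ φ in (0:ℝ)..(π / 2), ∫ ψ in (0:ℝ)..(π / 2), F φ ψ = 1 / 4 := by
    rw [← sphereOctantIntegral_mul_mul_sqrt_xz,
      sphereOctantIntegral_eq_intervalIntegral (by fun_prop)]
    rfl
  have integral_G : ∫ θ in (0:ℝ)..(π / 2), ∫ φ in (0:ℝ)..(π / 2), G θ φ = π ^ 2 / 8 := by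
    rw [← sphereOctantIntegral_sqrt_yz, sphereOctantIntegral_eq_intervalIntegral (by fun_prop)]
    rfl
  calc
    _ = 192 / π ^ 2 * ∫ θ in (0:ℝ)..(π / 2), ∫ φ in (0:ℝ)..(π / 2), ∫ ψ in (0:ℝ)..(π / 2),
          (F φ ψ + G θ φ * (cos ψ * sin ψ ^ 3)) := by
      congr! 7 with θ φ ψ
      simp only [F, G, mul_pow]
      ring
    _ = 192 / π ^ 2 * (π / 2 * (1 / 4) + π ^ 2 / 8 * (1 / 4)) := by
      rw [integral_integral_integral_add_mul (by fun_prop) (by fun_prop) (by fun_prop), integral_F,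
        integral_G, integral_cos_mul_sin_pow_three, sub_zero]
    _ = 6 * (1 + 4 / π) := by
      field_simp
      ring
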